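/- In the group presented by generators e, f, g with relators e·f·g and e⁻¹·f⁻¹·g⁻¹, for every integer n the relation eⁿ·fⁿ·gⁿ = 1 holds. -/

import Mathlib

/-- The two relators `e·f·g` and `e⁻¹·f⁻¹·g⁻¹` on generators `e = 0`, `f = 1`, `g = 2`. -/
def triRels : Set (FreeGroup (Fin 3)) :=
  { FreeGroup.of 0 * FreeGroup.of 1 * FreeGroup.of 2,
    (FreeGroup.of 0)⁻¹ * (FreeGroup.of 1)⁻¹ * (FreeGroup.of 2)⁻¹ }

section Group

variable {G : Type*} [Group G] {a b c : G}

theorem commute_of_mul_mul_eq_one_of_inv_mul_inv_mul_inv_eq_one (h : a * b * c = 1)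
    (h_inv : a⁻¹ * b⁻¹ * c⁻¹ = 1) : Commute a b :=
  calc
    a * b = c⁻¹ := eq_inv_of_mul_eq_one_left h
    _ = (a⁻¹ * b⁻¹)⁻¹ := congrArg (·⁻¹) (mul_inv_eq_one.mp h_inv).symm
    _ = b * a := by rw [mul_inv_rev, inv_inv, inv_inv]

theorem zpow_mul_zpow_mul_zpow_eq_one_of_commute (hab : Commute a b) (h : a * b * c = 1) (n : ℤ) :
    a ^ n * b ^ n * c ^ n = 1 := by
  rw [eq_inv_of_mul_eq_one_right h, inv_zpow, hab.mul_zpow, mul_inv_cancel]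

end Group

/-- In the group `⟨e, f, g ∣ efg, e⁻¹f⁻¹g⁻¹⟩`, the relation `eⁿfⁿgⁿ = 1` holds for every
integer `n`. -/
theorem zpow_mul_zpow_mul_zpow_eq_one (n : ℤ) :
    (PresentedGroup.of (rels := triRels) 0) ^ n *
      (PresentedGroup.of (rels := triRels) 1) ^ n *
      (PresentedGroup.of (rels := triRels) 2) ^ n = 1 := by
  let x (i : Fin 3) : PresentedGroup triRels := PresentedGroup.of i
  have h_efg : x 0 * x 1 * x 2 = 1 := PresentedGroup.one_of_mem (Or.inl rfl)
  have h_inv : (x 0)⁻¹ * (x 1)⁻¹ * (x 2)⁻¹ = 1 := PresentedGroup.one_of_mem (Or.inr rfl)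
  have h_comm : Commute (x 0) (x 1) :=
    commute_of_mul_mul_eq_one_of_inv_mul_inv_mul_inv_eq_one h_efg h_inv
  exact zpow_mul_zpow_mul_zpow_eq_one_of_commute h_comm h_efg n
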